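/- arXiv:2303.07664 — 2 statements merged into one kernel-verified Lean document; each statement's English description precedes it below -/
import Mathlib

section
/- Zucker's evaluation: ∑_{k≥0} C(2k,k)/(16^k·(2k+1)²) = (3√3/4)·∑_{k≥0} (1/(3k+1)² − 1/(3k+2)²), where C(2k,k) denotes the central binomial coefficient and the right-hand series is (3√3/4)·L₋₃(2), the Dirichlet L-value for the character modulo 3. -/
open Real

/-- Power series with coefficients `a`. -/
noncomputable def zps {𝕜 : Type*} [RCLike 𝕜] (a : ℕ → 𝕜) (z : 𝕜) : 𝕜 := ∑' n, a n * z ^ n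

lemma zsum_congr {𝕜 : Type*} [RCLike 𝕜] {f g : ℕ → 𝕜} {a : 𝕜} (h : HasSum f a)
    (e : ∀ n, g n = f n) : HasSum g a := by
  rw [funext e]; exact h

lemma zps_summable {𝕜 : Type*} [RCLike 𝕜] (a : ℕ → 𝕜) (ha : ∀ n, ‖a n‖ ≤ 1) (z : 𝕜)
    (hz : ‖z‖ < 1) : Summable (fun n => a n * z ^ n) := by
  refine Summable.of_norm_bounded (g := fun n => ‖z‖ ^ n)
    (summable_geometric_of_lt_one (norm_nonneg _) hz) fun n => ?_
  rw [norm_mul, norm_pow]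
  exact mul_le_of_le_one_left (by positivity) (ha n)

lemma zps_deriv {𝕜 : Type*} [RCLike 𝕜] (a : ℕ → 𝕜) (ha : ∀ n, ‖a n‖ ≤ 1) (z : 𝕜)
    (hz : ‖z‖ < 1) : ∃ d : 𝕜, HasDerivAt (zps a) d z ∧
      HasSum (fun n : ℕ => ((n : 𝕜) + 1) * a (n + 1) * z ^ n) d ∧
      HasSum (fun n : ℕ => (n : 𝕜) * a n * z ^ n) (z * d) := by
  obtain ⟨r, hr1, hr2⟩ := exists_between hz
  have hr0 : 0 < r := lt_of_le_of_lt (norm_nonneg _) hr1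
  have hu : Summable (fun n : ℕ => (n : ℝ) * r ^ (n - 1)) := by
    have h := summable_pow_mul_geometric_of_norm_lt_one (R := ℝ) 1 (r := r)
      (by rwa [Real.norm_of_nonneg hr0.le])
    have h2 := h.mul_right r⁻¹
    refine h2.congr fun n => ?_
    cases n with
    | zero => simp
    | succ m => simp [pow_succ]; field_simp
  have hb : ∀ (n : ℕ) (y : 𝕜), y ∈ Metric.ball (0 : 𝕜) r →
      ‖a n * ((n : 𝕜) * y ^ (n - 1))‖ ≤ (n : ℝ) * r ^ (n - 1) := by
    intro n y hy
    rw [mem_ball_zero_iff] at hy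
    rw [norm_mul, norm_mul, norm_pow, RCLike.norm_natCast]
    refine (mul_le_of_le_one_left (by positivity) (ha n)).trans ?_
    gcongr
  have hzm : z ∈ Metric.ball (0 : 𝕜) r := by rwa [mem_ball_zero_iff]
  have hD := hasDerivAt_tsum_of_isPreconnected (𝕜 := 𝕜) (g := fun n z => a n * z ^ n)
    (g' := fun n z => a n * ((n : 𝕜) * z ^ (n - 1))) hu Metric.isOpen_ball
    (convex_ball (0 : 𝕜) r).isPreconnected
    (fun n y _ => (hasDerivAt_pow n y).const_mul (a n)) hb hzm (zps_summable a ha z hz) hzm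
  have hs : Summable (fun n : ℕ => a n * ((n : 𝕜) * z ^ (n - 1))) :=
    Summable.of_norm_bounded hu fun n => hb n z hzm
  refine ⟨_, hD, ?_, ?_⟩
  · have h := (hasSum_nat_add_iff' (f := fun n : ℕ => a n * ((n : 𝕜) * z ^ (n - 1))) 1).2 hs.hasSum
    simp only [Finset.range_one, Finset.sum_singleton, Nat.cast_zero, zero_mul, mul_zero,
      sub_zero] at h
    refine zsum_congr h fun n => ?_
    simp; ring
  · have h := hs.hasSum.mul_left z
    refine zsum_congr h fun n => ?_
    cases n with
    | zero => simp
    | succ m => simp [pow_succ]; ring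

noncomputable def zc (n : ℕ) : ℝ := (Nat.centralBinom n : ℝ) / 4 ^ n

lemma zc_nonneg (n : ℕ) : 0 ≤ zc n := by unfold zc; positivity

lemma zc_le (n : ℕ) : zc n ≤ 1 := by
  unfold zc
  rw [div_le_one (by positivity)]
  exact_mod_cast Nat.centralBinom_le_four_pow n

lemma zc_rec (n : ℕ) : 2 * ((n : ℝ) + 1) * zc (n + 1) = (2 * n + 1) * zc n := by
  have h : ((n : ℝ) + 1) * (Nat.centralBinom (n + 1) : ℝ) =
      2 * (2 * n + 1) * (Nat.centralBinom n : ℝ) := by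
    exact_mod_cast Nat.succ_mul_centralBinom_succ n
  unfold zc
  rw [pow_succ]
  field_simp
  linarith

noncomputable def zq (n : ℕ) : ℝ := zc n / (2 * n + 1)
noncomputable def zs (n : ℕ) : ℝ := zc n / (2 * n + 1) ^ 2

lemma zc_norm (n : ℕ) : ‖zc n‖ ≤ 1 := by
  rw [Real.norm_of_nonneg (zc_nonneg n)]; exact zc_le n

lemma zq_norm (n : ℕ) : ‖zq n‖ ≤ 1 := by
  have := zc_nonneg n
  unfold zq
  rw [Real.norm_of_nonneg (by positivity)]
  have : (1 : ℝ) ≤ 2 * n + 1 := by simp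
  exact div_le_one_of_le₀ ((zc_le n).trans this) (by positivity)

lemma zs_norm (n : ℕ) : ‖zs n‖ ≤ 1 := by
  have := zc_nonneg n
  unfold zs
  rw [Real.norm_of_nonneg (by positivity)]
  have : (1 : ℝ) ≤ (2 * n + 1) ^ 2 := one_le_pow₀ (by simp)
  exact div_le_one_of_le₀ ((zc_le n).trans this) (by positivity)

lemma const_aux (F : ℝ → ℝ) (b : ℝ) (hb : 0 < b) (hc : ContinuousOn F (Set.Icc 0 b))
    (hd : ∀ u ∈ Set.Ioo 0 b, HasDerivAt F 0 u) : F b = F 0 := by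
  obtain ⟨c, _, h⟩ := exists_hasDerivAt_eq_slope F (fun _ => 0) hb hc hd
  have : b - 0 ≠ 0 := by linarith
  field_simp at h
  linarith

lemma sin_sq_norm (u : ℝ) (h0 : 0 ≤ u) (h1 : u ≤ π / 6) : ‖sin u ^ 2‖ < 1 := by
  have hc : 0 < cos u := cos_pos_of_mem_Ioo ⟨by linarith [pi_pos], by linarith [pi_pos]⟩
  rw [Real.norm_of_nonneg (by positivity)]
  nlinarith [sin_sq_add_cos_sq u]

lemma sin_sq_deriv (u : ℝ) : HasDerivAt (fun u => sin u ^ 2) (2 * sin u * cos u) u := by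
  have h := (hasDerivAt_sin u).pow 2
  refine h.congr_deriv ?_
  simp

lemma P_eq (u : ℝ) (h0 : 0 ≤ u) (h1 : u ≤ π / 6) : zps zc (sin u ^ 2) * cos u = 1 := by
  have hD : ∀ v, 0 ≤ v → v ≤ π / 6 →
      HasDerivAt (fun u => zps zc (sin u ^ 2) * cos u) 0 v := by
    intro v h0 h1
    have hn := sin_sq_norm v h0 h1
    obtain ⟨d, hd, hs1, hs2⟩ := zps_deriv zc zc_norm _ hn
    have h3 := (zps_summable zc zc_norm _ hn).hasSum
    have key : 2 * d - 2 * (sin v ^ 2 * d) - zps zc (sin v ^ 2) = 0 := by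
      refine HasSum.unique (((hs1.mul_left 2).sub (hs2.mul_left 2)).sub h3) ?_
      refine zsum_congr hasSum_zero fun n => ?_
      linear_combination (sin v ^ 2) ^ n * zc_rec n
    have h4 := (hd.comp v (sin_sq_deriv v)).mul (hasDerivAt_cos v)
    refine h4.congr_deriv ?_
    simp only [Function.comp]
    linear_combination sin v * key + 2 * d * sin v * sin_sq_add_cos_sq v
  have hz : zps zc (sin 0 ^ 2) * cos 0 = 1 := by
    unfold zps
    rw [tsum_eq_single 0 (by intro n hn; simp [hn])]
    simp [zc]
  rcases h0.eq_or_lt with rfl | h0'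
  · exact hz
  · have := const_aux _ u h0' (fun v hv => (hD v hv.1 (hv.2.trans h1)).continuousAt.continuousWithinAt)
      (fun v hv => hD v hv.1.le (hv.2.le.trans h1))
    rw [this]
    exact hz

lemma Q_eq (u : ℝ) (h0 : 0 ≤ u) (h1 : u ≤ π / 6) : zps zq (sin u ^ 2) * sin u = u := by
  have hD : ∀ v, 0 ≤ v → v ≤ π / 6 →
      HasDerivAt (fun u => zps zq (sin u ^ 2) * sin u - u) 0 v := by
    intro v h0 h1
    have hn := sin_sq_norm v h0 h1
    obtain ⟨d, hd, hs1, hs2⟩ := zps_deriv zq zq_norm _ hn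
    have h3 := (zps_summable zq zq_norm _ hn).hasSum
    have key : 2 * (sin v ^ 2 * d) + zps zq (sin v ^ 2) = zps zc (sin v ^ 2) := by
      refine HasSum.unique ((hs2.mul_left 2).add h3) ?_
      refine zsum_congr (zps_summable zc zc_norm _ hn).hasSum fun n => ?_
      unfold zq
      field_simp
    have h4 := ((hd.comp v (sin_sq_deriv v)).mul (hasDerivAt_sin v)).sub (hasDerivAt_id v)
    refine h4.congr_deriv ?_
    simp only [Function.comp]
    linear_combination cos v * key + P_eq v h0 h1
  rcases h0.eq_or_lt with rfl | h0'
  · simp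
  · have := const_aux _ u h0' (fun v hv => (hD v hv.1 (hv.2.trans h1)).continuousAt.continuousWithinAt)
      (fun v hv => hD v hv.1.le (hv.2.le.trans h1))
    simp only [sin_zero] at this
    linarith

lemma S_deriv (v : ℝ) (h0 : 0 ≤ v) (h1 : v ≤ π / 6) :
    HasDerivAt (fun u => zps zs (sin u ^ 2) * sin u) (cos v * zps zq (sin v ^ 2)) v := by
  have hn := sin_sq_norm v h0 h1
  obtain ⟨d, hd, hs1, hs2⟩ := zps_deriv zs zs_norm _ hn
  have h3 := (zps_summable zs zs_norm _ hn).hasSum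
  have key : 2 * (sin v ^ 2 * d) + zps zs (sin v ^ 2) = zps zq (sin v ^ 2) := by
    refine HasSum.unique ((hs2.mul_left 2).add h3) ?_
    refine zsum_congr (zps_summable zq zq_norm _ hn).hasSum fun n => ?_
    unfold zs zq
    field_simp
  have h4 := ((hd.comp v (sin_sq_deriv v)).mul (hasDerivAt_sin v))
  refine h4.congr_deriv ?_
  simp only [Function.comp]
  linear_combination cos v * key

noncomputable def zl (n : ℕ) : ℂ := 1 / (n : ℂ) ^ 2

lemma zl_norm_eq (n : ℕ) : ‖zl n‖ = 1 / (n : ℝ) ^ 2 := by simp [zl]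

lemma zl_norm (n : ℕ) : ‖zl n‖ ≤ 1 := by
  rw [zl_norm_eq]
  cases n with
  | zero => simp
  | succ m =>
    apply div_le_one_of_le₀ _ (by positivity)
    exact one_le_pow₀ (by simp)

lemma zl_cont : ContinuousOn (zps zl) (Metric.closedBall 0 1) := by
  refine continuousOn_tsum (u := fun n : ℕ => 1 / (n : ℝ) ^ 2) (fun n => by fun_prop)
    (Real.summable_one_div_nat_pow.2 (by norm_num)) ?_
  intro n x hx
  rw [mem_closedBall_zero_iff] at hx
  rw [norm_mul, zl_norm_eq, norm_pow]
  exact mul_le_of_le_one_right (by positivity) (pow_le_one₀ (norm_nonneg _) hx)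

noncomputable def zz (u : ℝ) : ℂ := 1 - Complex.exp (-2 * Complex.I * u)

lemma zz_eq (u : ℝ) : zz u =
    2 * Complex.sin u * (Complex.sin u + Complex.I * Complex.cos u) := by
  unfold zz
  have h1 : (-2 * Complex.I * u : ℂ) = (-u : ℂ) * Complex.I + (-u : ℂ) * Complex.I := by ring
  rw [h1, Complex.exp_add, Complex.exp_mul_I, Complex.cos_neg, Complex.sin_neg]
  have := Complex.sin_sq_add_cos_sq (u : ℂ)
  linear_combination (-1 : ℂ) * this - (Complex.sin u) ^ 2 * Complex.I_sq

lemma zz_norm (u : ℝ) (h0 : 0 ≤ u) (h1 : u ≤ π / 6) : ‖zz u‖ = 2 * sin u := by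
  rw [zz_eq, ← Complex.ofReal_sin, ← Complex.ofReal_cos]
  have hs : 0 ≤ sin u := sin_nonneg_of_nonneg_of_le_pi h0 (by linarith [pi_pos])
  have : ‖(sin u : ℂ) + Complex.I * (cos u : ℂ)‖ = 1 := by
    rw [mul_comm, Complex.norm_add_mul_I, sin_sq_add_cos_sq, sqrt_one]
  rw [norm_mul, norm_mul, this, Complex.norm_real, Real.norm_of_nonneg hs]
  simp

lemma zz_deriv (u : ℝ) : HasDerivAt zz (2 * Complex.I * Complex.exp (-2 * Complex.I * u)) u := by
  have h1 : HasDerivAt (fun x : ℂ => 1 - Complex.exp (-2 * Complex.I * x))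
      (2 * Complex.I * Complex.exp (-2 * Complex.I * u)) (u : ℂ) := by
    have := (((hasDerivAt_id (u : ℂ)).const_mul (-2 * Complex.I)).cexp).const_sub 1
    refine this.congr_deriv ?_
    simp; ring
  exact h1.comp_ofReal

lemma Li_deriv (v : ℝ) (h0 : 0 < v) (h1 : v < π / 6) :
    HasDerivAt (fun u => (zps zl (zz u)).im) (2 * v * cos v / sin v) v := by
  have hs : 0 < sin v := sin_pos_of_pos_of_lt_pi h0 (by linarith [pi_pos])
  have hn : ‖zz v‖ < 1 := by
    rw [zz_norm v h0.le h1.le]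
    have := sin_lt_sin_of_lt_of_le_pi_div_two (by linarith [pi_pos]) (by linarith [pi_pos]) h1
    rw [sin_pi_div_six] at this
    linarith
  obtain ⟨d, hd, -, hs2⟩ := zps_deriv zl zl_norm _ hn
  have key : zz v * d = 2 * Complex.I * v := by
    have hl := Complex.hasSum_taylorSeries_neg_log hn
    have e : -Complex.log (1 - zz v) = 2 * Complex.I * v := by
      unfold zz
      rw [sub_sub_cancel, Complex.log_exp]
      · ring
      · simp; linarith [pi_pos]
      · simp; linarith [pi_pos]
    rw [← e]
    refine hs2.unique ?_
    refine zsum_congr hl fun n => ?_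
    unfold zl
    rcases eq_or_ne n 0 with rfl | hn
    · simp
    · field_simp
  have h4 := hd.comp (h := zz) v (zz_deriv v)
  have h5 : HasDerivAt (fun u => (zps zl (zz u)).im)
      (d * (2 * Complex.I * Complex.exp (-2 * Complex.I * v))).im v := by
    have := Complex.imCLM.hasFDerivAt.comp_hasDerivAt v h4
    simpa [Function.comp_def] using this
  refine h5.congr_deriv ?_
  have hsc : Complex.sin v ≠ 0 := by
    rw [← Complex.ofReal_sin]; exact_mod_cast hs.ne'
  have e : d * (2 * Complex.I * Complex.exp (-2 * Complex.I * v)) =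
      ((2 * v : ℝ) : ℂ) + ((2 * v * cos v / sin v : ℝ) : ℂ) * Complex.I := by
    have hz0 : zz v ≠ 0 := by
      rw [← norm_ne_zero_iff, zz_norm v h0.le h1.le]; positivity
    have he : Complex.exp (-2 * Complex.I * v) = 1 - zz v := by unfold zz; ring
    apply mul_left_cancel₀ hz0
    rw [he]
    push_cast
    have : zz v * (d * (2 * Complex.I * (1 - zz v))) =
      (2 * Complex.I * v) * (2 * Complex.I * (1 - zz v)) := by rw [← key]; ring
    rw [this, zz_eq]
    field_simp
    have h2 := Complex.sin_sq_add_cos_sq (v : ℂ)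
    have h3 := Complex.I_sq
    set s := Complex.sin (v : ℂ)
    set c := Complex.cos (v : ℂ)
    grind
  rw [e, Complex.add_im, Complex.ofReal_im, Complex.im_ofReal_mul, Complex.I_im]
  ring

lemma main_eq : (zps zl (zz (π / 6))).im = 2 * (zps zs (sin (π / 6) ^ 2) * sin (π / 6)) := by
  have hp := pi_pos
  have := const_aux (fun u => (zps zl (zz u)).im - 2 * (zps zs (sin u ^ 2) * sin u)) (π / 6)
    (by positivity) ?_ ?_
  · have hz : zz 0 = 0 := by simp [zz]
    simp only [sin_zero, hz] at this
    have h0 : zps zl 0 = 0 := by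
      unfold zps
      rw [tsum_eq_single 0 (by intro n hn; simp [hn])]
      simp [zl]
    rw [h0] at this
    simp at this
    simp
    linarith
  · apply ContinuousOn.sub
    · apply Complex.continuous_im.comp_continuousOn
      apply zl_cont.comp
      · unfold zz; fun_prop
      · intro u hu
        rw [mem_closedBall_zero_iff, zz_norm u hu.1 hu.2]
        have := sin_le_sin_of_le_of_le_pi_div_two (by linarith [hu.1]) (by linarith) hu.2
        rw [sin_pi_div_six] at this
        linarith
    · apply ContinuousOn.mul continuousOn_const
      exact fun v hv => (S_deriv v hv.1 hv.2).continuousAt.continuousWithinAt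
  · intro u hu
    have hs : 0 < sin u := sin_pos_of_pos_of_lt_pi hu.1 (by linarith [hu.2])
    refine ((Li_deriv u hu.1 hu.2).sub ((S_deriv u hu.1.le hu.2.le).const_mul 2)).congr_deriv ?_
    have := Q_eq u hu.1.le hu.2.le
    field_simp
    linear_combination (-2) * cos u * this

lemma im_eq : (zps zl (zz (π / 6))).im = ∑' n : ℕ, sin (n * (π / 3)) / (n : ℝ) ^ 2 := by
  have hz : zz (π / 6) = Complex.exp ((π / 3 : ℝ) * Complex.I) := by
    rw [zz_eq, Complex.exp_mul_I, ← Complex.ofReal_sin, ← Complex.ofReal_cos,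
      ← Complex.ofReal_sin, ← Complex.ofReal_cos, sin_pi_div_six, cos_pi_div_six,
      sin_pi_div_three, cos_pi_div_three]
    push_cast; ring
  unfold zps
  rw [Complex.im_tsum]
  · congr 1 with n
    rw [hz, ← Complex.exp_nat_mul]
    have : (n : ℂ) * ((π / 3 : ℝ) * Complex.I) = ((n * (π / 3) : ℝ) : ℂ) * Complex.I := by
      push_cast; ring
    rw [this]
    have h2 : zl n = ((1 / (n : ℝ) ^ 2 : ℝ) : ℂ) := by simp [zl]
    rw [h2, Complex.im_ofReal_mul, Complex.exp_ofReal_mul_I_im]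
    ring
  · refine Summable.of_norm_bounded (g := fun n : ℕ => 1 / (n : ℝ) ^ 2)
      (Real.summable_one_div_nat_pow.2 (by norm_num)) fun n => ?_
    rw [norm_mul, zl_norm_eq, norm_pow, hz, Complex.norm_exp_ofReal_mul_I]
    simp

noncomputable def zg (n : ℕ) : ℝ := sin (n * (2 * π / 3)) / (n : ℝ) ^ 2

lemma sin_summable (x : ℝ) : Summable (fun n : ℕ => sin (n * x) / (n : ℝ) ^ 2) := by
  refine Summable.of_norm_bounded (g := fun n : ℕ => 1 / (n : ℝ) ^ 2)
    (Real.summable_one_div_nat_pow.2 (by norm_num)) fun n => ?_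
  rw [norm_div, norm_pow, RCLike.norm_natCast]
  gcongr
  exact abs_sin_le_one _

lemma cl_eq : ∑' n : ℕ, sin (n * (π / 3)) / (n : ℝ) ^ 2 = 3 / 2 * ∑' n, zg n := by
  have hg : Summable zg := sin_summable _
  have hf := sin_summable (π / 3)
  set f : ℕ → ℝ := fun n => sin (n * (π / 3)) / (n : ℝ) ^ 2 with hfd
  have inj1 : Function.Injective (fun k : ℕ => 2 * k) := fun a b h => by simpa using h
  have inj2 : Function.Injective (fun k : ℕ => 2 * k + 1) := fun a b h => by simpa using h
  have a1 := tsum_even_add_odd (f := f) (hf.comp_injective inj1) (hf.comp_injective inj2)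
  have a2 := tsum_even_add_odd (f := zg) (hg.comp_injective inj1) (hg.comp_injective inj2)
  have e1 : ∀ k, f (2 * k) = 1 / 4 * zg k := by
    intro k
    simp only [hfd, zg]
    push_cast
    rw [show (2 * (k : ℝ)) * (π / 3) = k * (2 * π / 3) by ring, mul_pow]
    rcases eq_or_ne k 0 with rfl | h
    · simp
    · field_simp; norm_num; ring
  have e2 : ∀ k, zg (2 * k) = - (1 / 4) * zg k := by
    intro k
    simp only [zg]
    push_cast
    rw [show (2 * (k : ℝ)) * (2 * π / 3) = k * (2 * π) - k * (2 * π / 3) by ring,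
      sin_nat_mul_two_pi_sub, mul_pow]
    rcases eq_or_ne k 0 with rfl | h
    · simp
    · field_simp; norm_num; ring
  have e3 : ∀ k, f (2 * k + 1) = zg (2 * k + 1) := by
    intro k
    simp only [hfd, zg]
    congr 1
    push_cast
    rw [show (2 * (k : ℝ) + 1) * (2 * π / 3) =
      π - (2 * (k : ℝ) + 1) * (π / 3) + k * (2 * π) by ring, sin_add_nat_mul_two_pi, sin_pi_sub]
  simp_rw [e1, e3, tsum_mul_left] at a1
  simp_rw [e2, tsum_mul_left] at a2
  linarith

lemma g_eq : ∑' n, zg n = sqrt 3 / 2 *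
    ∑' k : ℕ, (1 / (3 * (k : ℝ) + 1)^2 - 1 / (3 * (k : ℝ) + 2)^2) := by
  have hg : Summable zg := sin_summable _
  have s1 : sin (2 * π / 3) = sqrt 3 / 2 := by
    rw [show 2 * π / 3 = π - π / 3 by ring, sin_pi_sub, sin_pi_div_three]
  have s2 : sin (4 * π / 3) = - (sqrt 3 / 2) := by
    rw [show 4 * π / 3 = π / 3 + π by ring, sin_add_pi, sin_pi_div_three]
  have e0 : ∀ k : ℕ, zg (0 + 3 * k) = 0 := by
    intro k
    simp only [zg]
    push_cast
    rw [show (0 + 3 * (k : ℝ)) * (2 * π / 3) = 0 + k * (2 * π) by ring, sin_add_nat_mul_two_pi]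
    simp
  have e1 : ∀ k : ℕ, zg (1 + 3 * k) = sqrt 3 / 2 * (1 / (3 * (k : ℝ) + 1)^2) := by
    intro k
    simp only [zg]
    push_cast
    rw [show (1 + 3 * (k : ℝ)) * (2 * π / 3) = 2 * π / 3 + k * (2 * π) by ring,
      sin_add_nat_mul_two_pi, s1]
    ring
  have e2 : ∀ k : ℕ, zg (2 + 3 * k) = - (sqrt 3 / 2 * (1 / (3 * (k : ℝ) + 2)^2)) := by
    intro k
    simp only [zg]
    push_cast
    rw [show (2 + 3 * (k : ℝ)) * (2 * π / 3) = 4 * π / 3 + k * (2 * π) by ring,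
      sin_add_nat_mul_two_pi, s2]
    ring
  have i1 : Summable (fun k : ℕ => zg (1 + 3 * k)) :=
    hg.comp_injective (i := fun k : ℕ => 1 + 3 * k) fun a b h => by simpa using h
  have i2 : Summable (fun k : ℕ => zg (2 + 3 * k)) :=
    hg.comp_injective (i := fun k : ℕ => 2 + 3 * k) fun a b h => by simpa using h
  have h := Nat.sumByResidueClasses hg 3
  have h' : ∑' n, zg n = ∑' m, zg (0 + 3 * m) + ∑' m, zg (1 + 3 * m) + ∑' m, zg (2 + 3 * m) := by
    rw [h]
    exact Fin.sum_univ_three (fun j : Fin 3 => ∑' m, zg (j.val + 3 * m))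
  rw [h', ← tsum_mul_left, add_assoc, ← i1.tsum_add i2]
  simp_rw [e0, e1, e2]
  rw [tsum_zero, zero_add]
  congr 1 with k
  ring

/-- Zucker's evaluation:
`∑_{k≥0} C(2k,k)/(16^k·(2k+1)²) = (3√3/4)·∑_{k≥0} (1/(3k+1)² − 1/(3k+2)²)`,
the right-hand side being `(3√3/4)·L₋₃(2)`. -/
theorem zucker_binomial_sum :
    (∑' k : ℕ, ((2 * k).choose k : ℝ) / (16^k * (2 * (k : ℝ) + 1)^2))
      = (3 * Real.sqrt 3 / 4) *
          (∑' k : ℕ, (1 / (3 * (k : ℝ) + 1)^2 - 1 / (3 * (k : ℝ) + 2)^2)) := by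
  have h := main_eq
  rw [im_eq, cl_eq, g_eq, sin_pi_div_six] at h
  have e : zps zs ((1 / 2) ^ 2) =
      ∑' k : ℕ, ((2 * k).choose k : ℝ) / (16^k * (2 * (k : ℝ) + 1)^2) := by
    unfold zps
    congr 1 with k
    unfold zs zc
    rw [Nat.centralBinom_eq_two_mul_choose, show (16 : ℝ) = 4 * 4 by norm_num, mul_pow,
      show ((1 : ℝ) / 2) ^ 2 = 1 / 4 by norm_num, div_pow, one_pow]
    field_simp
  rw [e] at h
  linarith
end

section
/- The identity (3√π/8)·∑_{n≥0} n!·ψ(n+1)/Γ(n+3/2) · 4^{−n} + (π√3/6)·(γ + ln 3) = (2/√3)·Cl₂(π/3) holds, where ψ(n+1) = Hₙ − γ with Hₙ the n-th harmonic number and γ the Euler–Mascheroni constant, Γ is the Euler gamma function, and Cl₂(π/3) = ∑_{n≥1} sin(nπ/3)/n². Concretely: (3√π/8)·∑_{n≥0} n!·(Hₙ − γ)/Γ(n+3/2) · 4^{−n} + (π√3/6)·(γ + ln 3) = (2/√3)·∑_{n≥1} sin(nπ/3)/n². -/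
open Real

/-- The `n`-th harmonic number `Hₙ = ∑_{k=1}^n 1/k`, with `H₀ = 0`. -/
noncomputable def harmonicNum (n : ℕ) : ℝ := ∑ k ∈ Finset.range n, 1 / ((k : ℝ) + 1)

open MeasureTheory Filter Topology

lemma beta_val (n : ℕ) : (n.factorial : ℝ) * √π / Real.Gamma ((n:ℝ) + 3/2)
    = ∫ u in (-1:ℝ)..1, (1 - u^2)^n := by
  have h := @integral_sin_pow_odd_mul_cos_pow 0 π n 0
  simp only [pow_zero, mul_one, one_mul, Real.cos_pi, Real.cos_zero] at h
  rw [← h, integral_sin_pow_odd]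
  have hpi : √π ≠ 0 := by positivity
  induction n with
  | zero =>
    have : Real.Gamma (3/2) = 1/2 * √π := by
      rw [← Real.Gamma_one_half_eq, ← Real.Gamma_add_one (by norm_num)]; norm_num
    simp [this]
    field_simp
  | succ n ih =>
    have ih := ih (by simpa using @integral_sin_pow_odd_mul_cos_pow 0 π n 0)
    rw [Finset.prod_range_succ, ← mul_assoc, ← ih]
    have e : ((n+1 : ℕ):ℝ) + 3/2 = ((n:ℝ) + 3/2) + 1 := by push_cast; ring
    have hp : (0:ℝ) < (n:ℝ) + 3/2 := by positivity
    rw [e, Real.Gamma_add_one hp.ne']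
    have hg := (Real.Gamma_pos_of_pos hp).ne'
    have h3 : 2 * (n:ℝ) + 3 ≠ 0 := by positivity
    have h4 : (n:ℝ) + 3/2 ≠ 0 := by positivity
    rw [Nat.factorial_succ]
    push_cast
    field_simp

lemma harm_nonneg (n : ℕ) : 0 ≤ harmonicNum n := by
  unfold harmonicNum; positivity

lemma harm_le (n : ℕ) : harmonicNum n ≤ n := by
  unfold harmonicNum
  calc _ ≤ ∑ k ∈ Finset.range n, (1:ℝ) := by
        apply Finset.sum_le_sum
        intro k _
        rw [div_le_one (by positivity)]
        have : (0:ℝ) ≤ k := by positivity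
        linarith
    _ = n := by simp

lemma harm_succ (n : ℕ) : harmonicNum (n+1) = harmonicNum n + 1/((n:ℝ)+1) := by
  unfold harmonicNum; rw [Finset.sum_range_succ]

lemma harm_gen {y : ℝ} (hy : |y| < 1) :
    HasSum (fun n => harmonicNum n * y^n) (-Real.log (1 - y) / (1 - y)) := by
  have hs : Summable (fun n => harmonicNum n * y^n) := by
    have h1 := (summable_pow_mul_geometric_of_norm_lt_one (R := ℝ) 1 (r := |y|) (by simpa using hy))
    refine Summable.of_norm_bounded h1 ?_
    intro n
    rw [norm_mul, norm_pow, Real.norm_eq_abs, Real.norm_eq_abs, abs_of_nonneg (harm_nonneg n), pow_one]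
    exact mul_le_mul_of_nonneg_right (harm_le n) (by positivity)
  obtain ⟨S, hS⟩ := hs
  have h1 : HasSum (fun n => harmonicNum (n+1) * y^(n+1)) S := by
    have := (hasSum_nat_add_iff (f := fun n => harmonicNum n * y^n) (g := S) 1)
    rw [this]; simpa [harmonicNum] using hS
  have h2 := h1.sub (hS.mul_left y)
  have h3 := Real.hasSum_pow_div_log_of_abs_lt_one hy
  have h4 : S - y * S = -Real.log (1 - y) := by
    refine h2.unique ?_
    have hf : (fun n : ℕ => harmonicNum (n + 1) * y ^ (n + 1) - y * (harmonicNum n * y ^ n))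
        = fun n : ℕ => y ^ (n + 1) / ((n:ℝ) + 1) := by
      ext n
      rw [harm_succ]; ring
    rw [hf]; exact h3
  have h5 : 1 - y ≠ 0 := by have := (abs_lt.mp hy).2; linarith
  have : S = -Real.log (1 - y) / (1 - y) := by
    rw [eq_div_iff h5, ← h4]; ring
  rw [← this]; exact hS

lemma step_sum (c : ℝ) : HasSum
    (fun n : ℕ => ∫ u in (-1:ℝ)..1, (harmonicNum n - c) / 4^n * (1 - u^2)^n)
    (∫ u in (-1:ℝ)..1, 4 * (-Real.log ((3+u^2)/4) - c) / (3+u^2)) := by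
  have hb : Summable (fun n : ℕ => ((n:ℝ) + |c|) * (1/4)^n) := by
    have h1 := (summable_pow_mul_geometric_of_norm_lt_one (R := ℝ) 1 (r := 1/4) (by norm_num))
    have h2 := (summable_geometric_of_lt_one (r := (1/4:ℝ)) (by norm_num) (by norm_num)).mul_left |c|
    refine (h1.add h2).congr fun n => ?_
    rw [pow_one]; ring
  refine intervalIntegral.hasSum_integral_of_dominated_convergence
    (F := fun (n : ℕ) (u : ℝ) => (harmonicNum n - c) / 4^n * (1 - u^2)^n)
    (fun n _ => ((n:ℝ) + |c|) * (1/4)^n) ?_ ?_ ?_ ?_ ?_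
  · intro n
    exact (by fun_prop : Continuous _).aestronglyMeasurable
  · intro n
    refine Eventually.of_forall fun u hu => ?_
    rw [Set.uIoc_of_le (by norm_num)] at hu
    have h0 : 0 ≤ 1 - u^2 := by nlinarith [hu.1, hu.2]
    have h1 : 1 - u^2 ≤ 1 := by nlinarith
    rw [norm_mul, norm_div, norm_pow, norm_pow, Real.norm_eq_abs, Real.norm_eq_abs, Real.norm_eq_abs,
      abs_of_nonneg h0, abs_of_pos (by norm_num : (0:ℝ) < 4), div_eq_mul_inv]
    have h2 : |harmonicNum n - c| ≤ n + |c| := by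
      refine (abs_sub _ _).trans ?_
      rw [abs_of_nonneg (harm_nonneg n)]
      linarith [harm_le n]
    have h3 : (1 - u^2)^n ≤ 1 := pow_le_one₀ h0 h1
    have h4 : ((4:ℝ)^n)⁻¹ = (1/4)^n := by simp
    rw [h4]
    calc _ ≤ (|harmonicNum n - c| * (1/4)^n) * 1 := by gcongr
      _ ≤ _ := by rw [mul_one]; gcongr
  · exact Eventually.of_forall fun _ _ => hb
  · simp
  · refine Eventually.of_forall fun u hu => ?_
    rw [Set.uIoc_of_le (by norm_num)] at hu
    have h0 : 0 ≤ 1 - u^2 := by nlinarith [hu.1, hu.2]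
    have hy : |(1 - u^2)/4| < 1 := by
      rw [abs_of_nonneg (by positivity)]; nlinarith
    have hg := (harm_gen hy).sub ((hasSum_geometric_of_abs_lt_one hy).mul_left c)
    have e : 1 - (1 - u^2)/4 = (3+u^2)/4 := by ring
    rw [e] at hg
    have h3 : 3 + u^2 ≠ 0 := by positivity
    convert hg using 1
    · ext n; rw [div_pow]; ring
    · field_simp

lemma pi6_cos {t : ℝ} (ht : t ∈ Set.Icc (-(π/6)) (π/6)) : 0 < Real.cos t := by
  apply Real.cos_pos_of_mem_Ioo
  constructor <;> linarith [ht.1, ht.2, Real.pi_pos]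

lemma step_subst (c : ℝ) :
    (∫ u in (-1:ℝ)..1, 4 * (-Real.log ((3+u^2)/4) - c) / (3+u^2))
    = 4 / √3 * (2 * (∫ t in (-(π/6))..(π/6), Real.log (2 * Real.cos t)) - (Real.log 3 + c) * (π/3)) := by
  have hle : -(π/6) ≤ π/6 := by linarith [Real.pi_pos]
  have h3 : √3 ≠ 0 := by positivity
  have hsq : √3^2 = 3 := Real.sq_sqrt (by norm_num)
  have key := @intervalIntegral.integral_comp_mul_deriv' (-(π/6)) (π/6)
    (fun t => √3 * Real.tan t) (fun t => √3 * (1 / Real.cos t ^ 2))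
    (fun u => 4 * (-Real.log ((3+u^2)/4) - c) / (3+u^2)) ?_ ?_ ?_
  · simp only [Real.tan_neg, Real.tan_pi_div_six, mul_neg, mul_one_div_cancel h3] at key
    rw [← key]
    have hi : IntervalIntegrable (fun t => Real.log (2 * Real.cos t)) volume (-(π/6)) (π/6) := by
      apply ContinuousOn.intervalIntegrable
      rw [Set.uIcc_of_le hle]
      apply ContinuousOn.log (by fun_prop)
      intro t ht
      have := pi6_cos ht
      positivity
    have : ∀ t ∈ Set.uIcc (-(π/6)) (π/6),
        ((fun u => 4 * (-Real.log ((3+u^2)/4) - c) / (3+u^2)) ∘ (fun t => √3 * Real.tan t)) t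
          * (√3 * (1 / Real.cos t ^ 2)) = 4 / √3 * (2 * Real.log (2 * Real.cos t) - (Real.log 3 + c)) := by
      intro t ht
      rw [Set.uIcc_of_le hle] at ht
      have hc := pi6_cos ht
      have e : 3 + (√3 * Real.tan t)^2 = 3 / Real.cos t ^ 2 := by
        rw [mul_pow, hsq, Real.tan_eq_sin_div_cos]
        field_simp
        linarith [Real.sin_sq_add_cos_sq t]
      have e2 : 3 / Real.cos t ^ 2 / 4 = 3 / (2 * Real.cos t)^2 := by
        field_simp; ring
      simp only [Function.comp]
      rw [e, e2, Real.log_div (by norm_num) (by positivity), Real.log_pow]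
      push_cast
      field_simp
      rw [hsq]; ring
    rw [intervalIntegral.integral_congr this, intervalIntegral.integral_const_mul,
      intervalIntegral.integral_sub (hi.const_mul 2) (by simp), intervalIntegral.integral_const_mul,
      intervalIntegral.integral_const]
    simp only [smul_eq_mul]
    ring
  · intro t ht
    rw [Set.uIcc_of_le hle] at ht
    exact (Real.hasDerivAt_tan (pi6_cos ht).ne').const_mul _
  · rw [Set.uIcc_of_le hle]
    apply ContinuousOn.mul continuousOn_const
    apply ContinuousOn.div continuousOn_const (by fun_prop)
    intro t ht
    have := pi6_cos ht
    positivity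
  · apply Continuous.continuousOn
    apply Continuous.div
    · apply Continuous.mul continuous_const
      apply Continuous.sub _ continuous_const
      apply Continuous.neg
      apply Continuous.log (by fun_prop)
      intro u; positivity
    · fun_prop
    · intro u; positivity

lemma log_re_series {r : ℝ} (h0 : 0 ≤ r) (h1 : r < 1) (t : ℝ) :
    HasSum (fun n : ℕ => (-1)^(n+1) * r^n / n * Real.cos (2 * n * t))
      (Real.log (1 + 2 * r * Real.cos (2*t) + r^2) / 2) := by
  have hz : ‖(r:ℂ) * Complex.exp ((2*t : ℝ) * Complex.I)‖ < 1 := by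
    rw [norm_mul, Complex.norm_exp_ofReal_mul_I, mul_one, Complex.norm_real, Real.norm_eq_abs,
      abs_of_nonneg h0]; exact h1
  have h := Complex.hasSum_re (Complex.hasSum_taylorSeries_log hz)
  convert h using 1
  · ext n
    rw [mul_pow, ← Complex.exp_nat_mul]
    have : (-1:ℂ)^(n+1) * ((r:ℂ)^n * Complex.exp ((n:ℂ) * ((2*t : ℝ) * Complex.I))) / (n:ℂ)
        = (((-1)^(n+1) * r^n / n : ℝ) : ℂ) * Complex.exp ((2 * n * t : ℝ) * Complex.I) := by
      push_cast
      rw [show (n:ℂ) * (2 * (t:ℂ) * Complex.I) = 2 * n * t * Complex.I by ring]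
      ring
    rw [this, Complex.re_ofReal_mul, Complex.exp_ofReal_mul_I_re]
  · have e : 1 + 2 * r * Real.cos (2*t) + r^2
        = ‖1 + (r:ℂ) * Complex.exp ((2*t : ℝ) * Complex.I)‖^2 := by
      rw [← Complex.normSq_eq_norm_sq, Complex.normSq_apply, Complex.add_re, Complex.add_im,
        Complex.re_ofReal_mul, Complex.im_ofReal_mul, Complex.exp_ofReal_mul_I_re,
        Complex.exp_ofReal_mul_I_im, Complex.one_re, Complex.one_im]
      linear_combination (-r^2) * Real.sin_sq_add_cos_sq (2*t)
    rw [e, Real.log_pow, Complex.log_re]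
    push_cast; ring

lemma int_cos (n : ℕ) (hn : n ≠ 0) : ∫ t in (-(π/6))..(π/6), Real.cos (2 * n * t)
    = Real.sin (n * π / 3) / n := by
  have h : (2 * (n:ℝ)) ≠ 0 := by positivity
  rw [intervalIntegral.integral_comp_mul_left (fun x => Real.cos x) h, integral_cos]
  rw [show 2 * (n:ℝ) * -(π/6) = -(n * π / 3) by ring, show 2 * (n:ℝ) * (π/6) = (n * π / 3) by ring,
    Real.sin_neg, smul_eq_mul]
  field_simp; ring

lemma int_r {r : ℝ} (h0 : 0 ≤ r) (h1 : r < 1) :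
    ∫ t in (-(π/6))..(π/6), Real.log (1 + 2 * r * Real.cos (2*t) + r^2) / 2
    = ∑' n : ℕ, (-1)^(n+1) * r^n * (Real.sin (n * π / 3) / (n:ℝ)^2) := by
  have hb : Summable (fun n : ℕ => r^n) := summable_geometric_of_lt_one h0 h1
  have h := @intervalIntegral.hasSum_integral_of_dominated_convergence ℝ _ _ (-(π/6)) (π/6)
    (fun t => Real.log (1 + 2 * r * Real.cos (2*t) + r^2) / 2) volume ℕ _
    (fun n t => (-1)^(n+1) * r^n / n * Real.cos (2 * n * t)) (fun n _ => r^n) ?_ ?_ ?_ ?_ ?_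
  · rw [← h.tsum_eq]
    congr 1
    ext n
    rw [intervalIntegral.integral_const_mul]
    rcases eq_or_ne n 0 with rfl | hn
    · simp
    · rw [int_cos n hn]
      ring
  · intro n
    exact (by fun_prop : Continuous _).aestronglyMeasurable
  · intro n
    refine Eventually.of_forall fun t _ => ?_
    rw [norm_mul, norm_div, norm_mul, norm_pow, norm_pow, norm_neg, norm_one, one_pow, one_mul,
      Real.norm_of_nonneg h0, Real.norm_natCast, Real.norm_eq_abs]
    rcases eq_or_ne n 0 with rfl | hn
    · simp
    have : (1:ℝ) ≤ n := by exact_mod_cast Nat.one_le_iff_ne_zero.mpr hn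
    calc r^n / n * |Real.cos (2*n*t)| ≤ r^n / 1 * 1 := by
          gcongr
          exact Real.abs_cos_le_one _
      _ = r^n := by ring
  · exact Eventually.of_forall fun _ _ => hb
  · simp
  · exact Eventually.of_forall fun t _ => log_re_series h0 h1 t

lemma summ_sq (g : ℕ → ℝ) (hg : ∀ n, |g n| ≤ 1) : Summable (fun n : ℕ => g n / (n:ℝ)^2) := by
  refine Summable.of_norm_bounded (Real.summable_one_div_nat_pow.mpr (by norm_num : 1 < 2)) ?_
  intro n
  rw [norm_div, norm_pow, Real.norm_natCast, Real.norm_eq_abs]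
  gcongr
  exact hg n

lemma int_one :
    ∫ t in (-(π/6))..(π/6), Real.log (2 * Real.cos t)
    = ∑' n : ℕ, (-1)^(n+1) * (Real.sin (n * π / 3) / (n:ℝ)^2) := by
  have hle : -(π/6) ≤ π/6 := by linarith [Real.pi_pos]
  have hc2 : ∀ t ∈ Set.Icc (-(π/6)) (π/6), 0 ≤ Real.cos (2*t) := by
    intro t ht
    apply Real.cos_nonneg_of_mem_Icc
    constructor <;> linarith [ht.1, ht.2, Real.pi_pos]
  let F : ℝ → ℝ → ℝ := fun r t => Real.log (max 1 (1 + 2 * r * Real.cos (2*t) + r^2)) / 2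
  have hF : Continuous (Function.uncurry F) := by
    apply Continuous.div_const
    apply Continuous.log
    · fun_prop
    · intro x
      exact (lt_of_lt_of_le one_pos (le_max_left _ _)).ne'
  have hFc := intervalIntegral.continuous_parametric_intervalIntegral_of_continuous' (μ := volume) hF
    (-(π/6)) (π/6)
  have hFe : ∀ r, 0 ≤ r → ∀ t ∈ Set.Icc (-(π/6)) (π/6),
      F r t = Real.log (1 + 2 * r * Real.cos (2*t) + r^2) / 2 := by
    intro r hr t ht
    have := hc2 t ht
    simp only [F]
    rw [max_eq_right]
    have : 0 ≤ 2 * r * Real.cos (2*t) := by positivity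
    nlinarith
  have hG : ContinuousOn (fun r : ℝ => ∑' n : ℕ, (-1)^(n+1) * r^n * (Real.sin (n * π / 3) / (n:ℝ)^2))
      (Set.Icc 0 1) := by
    apply continuousOn_tsum (u := fun n : ℕ => 1 / (n:ℝ)^2)
    · intro n; fun_prop
    · exact Real.summable_one_div_nat_pow.mpr (by norm_num : 1 < 2)
    · intro n r hr
      rw [norm_mul, norm_mul, norm_div, norm_pow, norm_pow, norm_pow, norm_neg, norm_one, one_pow,
        one_mul, Real.norm_of_nonneg hr.1, Real.norm_natCast, Real.norm_eq_abs]
      have : r^n ≤ 1 := pow_le_one₀ hr.1 hr.2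
      calc r^n * (|Real.sin (n * π / 3)| / (n:ℝ)^2) ≤ 1 * (1 / (n:ℝ)^2) := by
            gcongr
            exact Real.abs_sin_le_one _
        _ = _ := one_mul _
  have hG1 : Tendsto (fun r : ℝ => ∑' n : ℕ, (-1)^(n+1) * r^n * (Real.sin (n * π / 3) / (n:ℝ)^2))
      (𝓝[Set.Ico 0 1] 1) (𝓝 (∑' n : ℕ, (-1)^(n+1) * (1:ℝ)^n * (Real.sin (n * π / 3) / (n:ℝ)^2))) :=
    ((hG 1 (by simp)).mono Set.Ico_subset_Icc_self)
  have hF1 : Tendsto (fun r : ℝ => ∫ t in (-(π/6))..(π/6), F r t)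
      (𝓝[Set.Ico 0 1] 1) (𝓝 (∫ t in (-(π/6))..(π/6), F 1 t)) :=
    (hFc.tendsto 1).mono_left nhdsWithin_le_nhds
  have hne : (𝓝[Set.Ico (0:ℝ) 1] 1).NeBot := by
    rw [← mem_closure_iff_nhdsWithin_neBot, closure_Ico (by norm_num)]
    simp
  have heq : (fun r : ℝ => ∫ t in (-(π/6))..(π/6), F r t) =ᶠ[𝓝[Set.Ico 0 1] 1]
      (fun r : ℝ => ∑' n : ℕ, (-1)^(n+1) * r^n * (Real.sin (n * π / 3) / (n:ℝ)^2)) := by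
    filter_upwards [self_mem_nhdsWithin] with r hr
    rw [← int_r hr.1 hr.2]
    apply intervalIntegral.integral_congr
    intro t ht
    rw [Set.uIcc_of_le hle] at ht
    exact hFe r hr.1 t ht
  have := tendsto_nhds_unique (hF1.congr' heq) hG1
  simp only [one_pow, mul_one] at this
  rw [← this]
  apply intervalIntegral.integral_congr
  intro t ht
  rw [Set.uIcc_of_le hle] at ht
  have hc := pi6_cos ht
  simp only
  rw [hFe 1 zero_le_one t ht, Real.cos_two_mul,
    show 1 + 2 * 1 * (2 * Real.cos t ^ 2 - 1) + (1:ℝ)^2 = (2 * Real.cos t)^2 by ring, Real.log_pow]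
  push_cast; ring

lemma clausen_rel :
    ∑' n : ℕ, (-1)^(n+1) * (Real.sin (n * π / 3) / (n:ℝ)^2)
    = 2 / 3 * ∑' n : ℕ, Real.sin (n * π / 3) / (n:ℝ)^2 := by
  have hs : Summable (fun n : ℕ => Real.sin (n * π / 3) / (n:ℝ)^2) :=
    summ_sq _ fun n => Real.abs_sin_le_one _
  have ht : Summable (fun n : ℕ => (-1)^(n+1) * (Real.sin (n * π / 3) / (n:ℝ)^2)) := by
    refine Summable.of_norm_bounded hs.norm ?_
    intro n; simp
  -- sin (2 n π / 3) = (-1)^(n+1) sin (n π / 3)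
  have hsin : ∀ n : ℕ, Real.sin (((2 * n : ℕ) : ℝ) * π / 3) = (-1)^(n+1) * Real.sin (n * π / 3) := by
    intro n
    have : ((2 * n : ℕ) : ℝ) * π / 3 = n * π - n * π / 3 := by push_cast; ring
    rw [this, Real.sin_nat_mul_pi_sub]
    ring
  have heven : Summable (fun n : ℕ => Real.sin (((2 * n : ℕ) : ℝ) * π / 3) / ((2 * n : ℕ):ℝ)^2) :=
    hs.comp_injective (i := fun n => 2 * n) (fun a b h => by simpa using h)
  have hodd : Summable (fun n : ℕ => Real.sin (((2 * n + 1 : ℕ) : ℝ) * π / 3) / ((2 * n + 1 : ℕ):ℝ)^2) :=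
    hs.comp_injective (i := fun n => 2 * n + 1) (fun a b h => by simpa using h)
  have e1 : ∑' n : ℕ, Real.sin (((2 * n : ℕ) : ℝ) * π / 3) / ((2 * n : ℕ):ℝ)^2
      = 1/4 * ∑' n : ℕ, (-1)^(n+1) * (Real.sin (n * π / 3) / (n:ℝ)^2) := by
    rw [← tsum_mul_left]
    congr 1; ext n
    rw [hsin]
    push_cast
    rw [mul_pow, mul_div_assoc, div_mul_eq_div_div_swap]
    ring
  have hS := heven.hasSum.even_add_odd (f := fun n : ℕ => Real.sin (n * π / 3) / (n:ℝ)^2) hodd.hasSum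
  have hT := HasSum.even_add_odd
    (f := fun n : ℕ => (-1)^(n+1) * (Real.sin (n * π / 3) / (n:ℝ)^2))
    (m := -∑' n : ℕ, Real.sin (((2 * n : ℕ) : ℝ) * π / 3) / ((2 * n : ℕ):ℝ)^2)
    (m' := ∑' n : ℕ, Real.sin (((2 * n + 1 : ℕ) : ℝ) * π / 3) / ((2 * n + 1 : ℕ):ℝ)^2)
    (by
      have := heven.hasSum.neg
      have hf : (fun k : ℕ => (-1 : ℝ)^(2 * k + 1) *
            (Real.sin (((2 * k : ℕ) : ℝ) * π / 3) / ((2 * k : ℕ):ℝ)^2))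
          = fun k : ℕ => -(Real.sin (((2 * k : ℕ) : ℝ) * π / 3) / ((2 * k : ℕ):ℝ)^2) := by
        ext k
        rw [pow_succ, pow_mul]; simp
      rw [hf]; exact this)
    (by
      convert hodd.hasSum using 2 with n
      rw [pow_succ, pow_succ, pow_mul]; simp)
  have hS := hS.tsum_eq
  have hT := hT.tsum_eq
  linarith

theorem feynman_harmonic_identity :
    (3 * Real.sqrt π / 8) *
        (∑' n : ℕ, (n.factorial : ℝ) * (harmonicNum n - Real.eulerMascheroniConstant) /
          Real.Gamma ((n : ℝ) + 3/2) / 4^n)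
      + (π * Real.sqrt 3 / 6) * (Real.eulerMascheroniConstant + Real.log 3)
      = (2 / Real.sqrt 3) *
          (∑' n : ℕ, Real.sin (((n : ℝ) + 1) * π / 3) / ((n : ℝ) + 1)^2) := by
  have h3 : √3 ≠ 0 := by positivity
  have hsq : √3^2 = 3 := Real.sq_sqrt (by norm_num)
  have hs : Summable (fun n : ℕ => Real.sin (n * π / 3) / (n:ℝ)^2) :=
    summ_sq _ fun n => Real.abs_sin_le_one _
  have e1 := hs.tsum_eq_zero_add
  simp only [Nat.cast_zero, zero_mul, zero_div, Real.sin_zero, zero_add, Nat.cast_add,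
    Nat.cast_one] at e1
  rw [← e1]
  have e2 : √π * (∑' n : ℕ, (n.factorial : ℝ) * (harmonicNum n - Real.eulerMascheroniConstant) /
          Real.Gamma ((n : ℝ) + 3/2) / 4^n)
      = ∫ u in (-1:ℝ)..1, 4 * (-Real.log ((3+u^2)/4) - Real.eulerMascheroniConstant) / (3+u^2) := by
    rw [← tsum_mul_left, ← (step_sum Real.eulerMascheroniConstant).tsum_eq]
    congr 1; ext n
    rw [intervalIntegral.integral_const_mul, ← beta_val]
    ring
  rw [step_subst, int_one, clausen_rel] at e2
  generalize (∑' n : ℕ, Real.sin (n * π / 3) / (n:ℝ)^2) = S at e2 ⊢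
  have : 3 * √π / 8 * (∑' n : ℕ, (n.factorial : ℝ) * (harmonicNum n - Real.eulerMascheroniConstant) /
          Real.Gamma ((n : ℝ) + 3/2) / 4^n) = 3 / 8 * (√π * (∑' n : ℕ, (n.factorial : ℝ) * (harmonicNum n - Real.eulerMascheroniConstant) /
          Real.Gamma ((n : ℝ) + 3/2) / 4^n)) := by ring
  rw [this, e2]
  field_simp
  rw [hsq]
  ring
end
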